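/- arXiv:math/0608080 — 2 statements merged into one kernel-verified Lean document; each statement's English description precedes it below -/
import Mathlib

section
/- For every natural number i with i ≥ 1 there exists a polynomial q over ℚ with zero constant coefficient (q.coeff 0 = 0) such that, as Ω × Ω matrices over ℚ, B_i = q(B_1), where q(B_1) denotes the evaluation of q at the matrix B_1. (The modified i-deck operator is expressible in terms of the modified 1-deck operator, with no identity-operator term.) -/
/-!
Counting the pairs `(X, Y)` through the common part `W = S \ X` shows that `B_k` has `(T, S)` entry
`C(|S ∩ T|, m - k)` for `k ≤ m` (`B_apply`), and `B_k = 0` for `k > m`.  Multiplying by `B_1` on the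
right sums over all sets obtained from `S` by removing one element `x` and then adding one
element `y ∉ S \ {x}`; classifying the pairs `(x, y)` by membership in `T` and using the
absorption and Pascal identities for binomial coefficients gives, for `k < m`,

  `B_k * B_1 = (k + 1)² B_{k+1} + k (N - 2m + k + 1) B_k`  (`B_mul_B_one`).

Since `(k + 1)²` is invertible in `ℚ`, this recursion produces `B_{k+1}` from `B_k` as a polynomial
in `B_1`, starting from `B_1` itself, and never introduces a constant term.
-/

open Finset

/-- `Omega N m` is the type of `m`-element subsets of `Fin N`. -/
abbrev Omega (N m : ℕ) := {S : Finset (Fin N) // S.card = m}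

/-- `J N m i` is the Ω × Ω integer matrix whose `(S, T)` entry is `1` if
`|S ∩ T| = m − i` (i.e. `|S ∩ T| + i = m`) and `0` otherwise.  It encodes
the perturbed `i`-deck operation: remove `i` elements and add `i` elements
not originally present. -/
def J (N m i : ℕ) : Matrix (Omega N m) (Omega N m) ℤ := fun S T =>
  if ((S : Finset (Fin N)) ∩ (T : Finset (Fin N))).card + i = m then 1 else 0

/-- `B N m k` is the Ω × Ω integer matrix whose `(T, S)` entry is the number of
pairs `(X, Y)` with `X ⊆ S`, `|X| = k`, `Y ∩ (S \ X) = ∅`, `|Y| = k` and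
`(S \ X) ∪ Y = T`.  It encodes the modified `k`-deck operation: remove `k`
elements, then add `k` elements not currently present (an added element may
coincide with a removed one). -/
def B (N m k : ℕ) : Matrix (Omega N m) (Omega N m) ℤ := fun T S =>
  ((Finset.univ.filter (fun p : Finset (Fin N) × Finset (Fin N) =>
      p.1 ⊆ (S : Finset (Fin N)) ∧ p.1.card = k ∧
      p.2 ∩ ((S : Finset (Fin N)) \ p.1) = ∅ ∧ p.2.card = k ∧
      ((S : Finset (Fin N)) \ p.1) ∪ p.2 = (T : Finset (Fin N)))).card : ℤ)

lemma B_apply {N m k : ℕ} (hk : k ≤ m) (T S : Omega N m) :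
    B N m k T S = (((S.1 ∩ T.1).card.choose (m - k) : ℕ) : ℤ) := by
  obtain ⟨T, hT⟩ := T
  obtain ⟨S, hS⟩ := S
  unfold B
  rw [← Finset.card_powersetCard]
  congr 1
  refine Finset.card_bij' (fun p _ => S \ p.1) (fun W _ => (S \ W, T \ W)) ?_ ?_ ?_ ?_
  · rintro ⟨X, Y⟩ h
    simp only [mem_filter, mem_univ, true_and] at h
    obtain ⟨hX, hXc, -, -, hU⟩ := h
    rw [mem_powersetCard]
    refine ⟨subset_inter sdiff_subset (hU ▸ subset_union_left), ?_⟩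
    rw [card_sdiff_of_subset hX, hS, hXc]
  · intro W h
    rw [mem_powersetCard] at h
    obtain ⟨hW, hWc⟩ := h
    have hWS := hW.trans inter_subset_left
    have hWT := hW.trans inter_subset_right
    simp only [mem_filter, mem_univ, true_and]
    rw [Finset.sdiff_sdiff_eq_self hWS, card_sdiff_of_subset hWS, card_sdiff_of_subset hWT]
    refine ⟨sdiff_subset, by dsimp only; omega, ?_, by dsimp only; omega, ?_⟩
    · ext a; simp
    · ext a
      have := @hWT a
      simp only [mem_union, mem_sdiff]
      tauto
  · rintro ⟨X, Y⟩ h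
    simp only [mem_filter, mem_univ, true_and] at h
    obtain ⟨hX, hXc, hd, -, hU⟩ := h
    refine Prod.ext (Finset.sdiff_sdiff_eq_self hX) ?_
    ext a
    have h1 := Finset.ext_iff.1 hd a
    have h2 := Finset.ext_iff.1 hU a
    simp only [mem_union, mem_sdiff, mem_inter, notMem_empty, iff_false] at *
    tauto
  · intro W h
    rw [mem_powersetCard] at h
    exact Finset.sdiff_sdiff_eq_self (h.1.trans inter_subset_left)

lemma B_eq_zero {N m k : ℕ} (hk : m < k) : B N m k = 0 := by
  ext T S
  simp only [B, Matrix.zero_apply, Nat.cast_eq_zero, card_eq_zero]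
  refine filter_eq_empty_iff.2 ?_
  rintro ⟨X, Y⟩ - ⟨hX, hXc, -⟩
  have h := card_le_card hX
  rw [S.2] at h
  simp only at hXc h
  omega

/-- The entries of `B_1` count the ways to reach `R` from `S` by removing an element `x` and then
adding an element `y` not currently present. -/
lemma B_one_apply {N m : ℕ} (R S : Omega N m) :
    B N m 1 R S = ∑ x ∈ S.1, ∑ y ∈ (S.1.erase x)ᶜ,
      if insert y (S.1.erase x) = R.1 then (1 : ℤ) else 0 := by
  rw [Finset.sum_sigma', Finset.sum_boole]
  unfold B
  congr 1
  symm
  refine Finset.card_bij (fun p _ => ({p.1}, {p.2})) ?_ ?_ ?_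
  · rintro ⟨x, y⟩ h
    simp only [mem_filter, mem_sigma, mem_compl] at h
    obtain ⟨⟨hx, hy⟩, hU⟩ := h
    simp only [mem_filter, mem_univ, true_and, card_singleton, singleton_subset_iff,
      sdiff_singleton_eq_erase]
    refine ⟨hx, singleton_inter_of_notMem hy, ?_⟩
    rw [← hU, insert_eq, union_comm]
  · rintro ⟨x, y⟩ _ ⟨x', y'⟩ _ h
    simpa using h
  · rintro ⟨X, Y⟩ h
    simp only [mem_filter, mem_univ, true_and] at h
    obtain ⟨hX, hXc, hd, hYc, hU⟩ := h
    obtain ⟨x, rfl⟩ := card_eq_one.1 hXc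
    obtain ⟨y, rfl⟩ := card_eq_one.1 hYc
    rw [sdiff_singleton_eq_erase] at hd hU
    refine ⟨⟨x, y⟩, ?_, rfl⟩
    simp only [mem_filter, mem_sigma, mem_compl]
    refine ⟨⟨by simpa using hX, fun hy => ?_⟩, ?_⟩
    · have : y ∈ {y} ∩ S.1.erase x := mem_inter.2 ⟨mem_singleton_self y, hy⟩
      rw [hd] at this
      exact notMem_empty _ this
    · rw [← hU, insert_eq, union_comm]

lemma sum_mul_B_one {N m : ℕ} (S : Omega N m) (g : Finset (Fin N) → ℤ) :
    ∑ R : Omega N m, g R.1 * B N m 1 R S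
      = ∑ x ∈ S.1, ∑ y ∈ (S.1.erase x)ᶜ, g (insert y (S.1.erase x)) := by
  simp_rw [B_one_apply, Finset.mul_sum]
  rw [Finset.sum_comm]
  refine sum_congr rfl fun x hx => ?_
  rw [Finset.sum_comm]
  refine sum_congr rfl fun y hy => ?_
  have hc : (insert y (S.1.erase x)).card = m := by
    rw [card_insert_of_notMem (mem_compl.1 hy), card_erase_add_one hx, S.2]
  rw [Finset.sum_eq_single (⟨_, hc⟩ : Omega N m)]
  · simp
  · intro R _ hR
    rw [if_neg fun h => hR (Subtype.ext h.symm), mul_zero]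
  · simp

/-- Summing over the elements `y ∉ A` a function of the intersection size of `A ∪ {y}` with `T`. -/
lemma sum_add_element {N : ℕ} (A T : Finset (Fin N)) (f : ℕ → ℤ) :
    ∑ y ∈ Aᶜ, f (insert y A ∩ T).card
      = ((T.card : ℤ) - (A ∩ T).card) * f ((A ∩ T).card + 1)
        + ((N : ℤ) - A.card - T.card + (A ∩ T).card) * f (A ∩ T).card := by
  rw [← Finset.sum_filter_add_sum_filter_not Aᶜ (· ∈ T)]
  have h1 : ∀ y ∈ Aᶜ.filter (· ∈ T), f (insert y A ∩ T).card = f ((A ∩ T).card + 1) := by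
    intro y hy
    simp only [mem_filter, mem_compl] at hy
    rw [insert_inter_of_mem hy.2, card_insert_of_notMem (by simp [hy.1])]
  have h2 : ∀ y ∈ Aᶜ.filter (¬ · ∈ T), f (insert y A ∩ T).card = f (A ∩ T).card := by
    intro y hy
    simp only [mem_filter, mem_compl] at hy
    rw [insert_inter_of_notMem hy.2]
  have c1 : (Aᶜ.filter (· ∈ T)).card + (A ∩ T).card = T.card := by
    have : Aᶜ.filter (· ∈ T) = T \ A := by ext a; simp [and_comm]
    rw [this, inter_comm, card_sdiff_add_card_inter]
  have c2 := Finset.card_filter_add_card_filter_not (s := Aᶜ) (· ∈ T)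
  have c3 := Finset.card_add_card_compl A
  rw [Fintype.card_fin] at c3
  rw [sum_congr rfl h1, sum_congr rfl h2, sum_const, sum_const, nsmul_eq_mul, nsmul_eq_mul]
  zify at c1 c2 c3
  congr 2 <;> linarith

/-- Summing over the elements `x ∈ S` a function of the intersection size of `S \ {x}` with `T`. -/
lemma sum_remove_element {N : ℕ} (S T : Finset (Fin N)) (f : ℕ → ℤ) :
    ∑ x ∈ S, f (S.erase x ∩ T).card
      = ((S ∩ T).card : ℤ) * f ((S ∩ T).card - 1)
        + ((S.card : ℤ) - (S ∩ T).card) * f (S ∩ T).card := by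
  rw [← Finset.sum_filter_add_sum_filter_not S (· ∈ T)]
  have h1 : ∀ x ∈ S.filter (· ∈ T), f (S.erase x ∩ T).card = f ((S ∩ T).card - 1) := by
    intro x hx
    simp only [mem_filter] at hx
    rw [erase_inter, card_erase_of_mem (mem_inter.2 hx)]
  have h2 : ∀ x ∈ S.filter (¬ · ∈ T), f (S.erase x ∩ T).card = f (S ∩ T).card := by
    intro x hx
    simp only [mem_filter] at hx
    rw [erase_inter, erase_eq_of_notMem (by simp [hx.2])]
  have c2 := Finset.card_filter_add_card_filter_not (s := S) (· ∈ T)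
  have c1 : S.filter (· ∈ T) = S ∩ T := by ext a; simp
  rw [sum_congr rfl h1, sum_congr rfl h2, sum_const, sum_const, nsmul_eq_mul, nsmul_eq_mul]
  rw [c1] at c2 ⊢
  zify at c2
  congr 2
  linarith

/-- The binomial identity behind the recursion: `s` is `m - k - 1` and `t` is `|S ∩ T|`. -/
lemma choose_identity (N m t s : ℤ) (a b : ℕ) (ha : (a : ℤ) = t) (hb : (b : ℤ) = s) :
    t * ((m - (t - 1)) * (a.choose (b + 1))
        + (N - (m - 1) - m + (t - 1)) * ((a - 1).choose (b + 1)))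
      + (m - t) * ((m - t) * ((a + 1).choose (b + 1))
        + (N - (m - 1) - m + t) * (a.choose (b + 1)))
      = (m - s) ^ 2 * (a.choose b)
        + (m - s - 1) * (N - m - s) * (a.choose (b + 1)) := by
  subst ha hb
  have hP : (((a + 1).choose (b + 1) : ℕ) : ℤ) = a.choose b + a.choose (b + 1) := by
    rw [Nat.choose_succ_succ]; push_cast; rfl
  have hA : ((b : ℤ) + 1) * a.choose (b + 1) = (a - b) * a.choose b := by
    rcases le_or_gt b a with h | h
    · have := Nat.choose_succ_right_eq a b
      zify [h] at this
      linarith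
    · rw [Nat.choose_eq_zero_of_lt h, Nat.choose_eq_zero_of_lt (by omega)]; simp
  have hD : (a : ℤ) * ((a - 1).choose (b + 1)) = (a - b - 1) * a.choose (b + 1) := by
    rcases a with _ | n
    · simp
    · have h1 := Nat.add_one_mul_choose_eq n b
      have h2 := Nat.choose_succ_succ n b
      zify at h1 h2
      simp only [Nat.succ_eq_add_one, Nat.add_sub_cancel] at *
      push_cast at *
      linear_combination (-1 : ℤ) * h1 - ((n : ℤ) + 1) * h2
  rw [hP]
  linear_combination ((N : ℤ) - 2 * m + a) * hD + (2 * m - a - b) * hA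

/-- The recursion for the modified deck operators. -/
lemma B_mul_B_one {N m k : ℕ} (hk : k < m) :
    B N m k * B N m 1
      = ((k : ℤ) + 1) ^ 2 • B N m (k + 1) + ((k : ℤ) * (N - 2 * m + k + 1)) • B N m k := by
  obtain ⟨s, rfl⟩ : ∃ s, m = k + 1 + s := ⟨m - (k + 1), by omega⟩
  ext T S
  have e1 : k + 1 + s - k = s + 1 := by omega
  have e2 : k + 1 + s - (k + 1) = s := by omega
  simp only [Matrix.mul_apply, Matrix.add_apply, Matrix.smul_apply, smul_eq_mul]
  rw [B_apply hk.le, B_apply (Nat.succ_le_of_lt hk)]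
  simp_rw [B_apply hk.le]
  rw [sum_mul_B_one S (fun R => (((R ∩ T.1).card.choose (k + 1 + s - k) : ℕ) : ℤ)), e1, e2]
  have hS := S.2
  have hT := T.2
  set t := (S.1 ∩ T.1).card with ht
  obtain ⟨F, hF⟩ : ∃ F : ℕ → ℤ, ∀ a : ℕ,
      F a = ((k + 1 + s : ℤ) - a) * ((a + 1).choose (s + 1) : ℕ)
        + ((N : ℤ) - (k + 1 + s - 1) - (k + 1 + s) + a) * (a.choose (s + 1) : ℕ) :=
    ⟨_, fun _ => rfl⟩
  have hin : ∀ x ∈ S.1, ∑ y ∈ (S.1.erase x)ᶜ,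
      (((insert y (S.1.erase x) ∩ T.1).card.choose (s + 1) : ℕ) : ℤ)
      = F (S.1.erase x ∩ T.1).card := by
    intro x hx
    rw [sum_add_element _ _ (fun a => ((a.choose (s + 1) : ℕ) : ℤ)), hT]
    have := card_erase_add_one hx
    rw [hS] at this
    zify at this
    rw [show ((S.1.erase x).card : ℤ) = k + 1 + s - 1 by linarith, hF]
    push_cast
    rfl
  rw [sum_congr rfl hin, sum_remove_element, ← ht, hS, hF, hF]
  have key := choose_identity N (k + 1 + s) t s t s rfl rfl
  -- The truncated `t - 1` is only harmless because its term carries the factor `t`.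
  rcases Nat.eq_zero_or_pos t with h0 | hpos
  · rw [h0] at key ⊢
    push_cast at key ⊢
    linear_combination key
  · simp only [Nat.sub_add_cancel hpos]
    push_cast [Nat.cast_sub hpos] at key ⊢
    linear_combination key

/-- For every `i ≥ 1` there is a polynomial `q` over `ℚ` with zero constant coefficient
such that `B_i = q(B_1)` as Ω × Ω matrices over `ℚ`: the modified `i`-deck operator is
expressible in terms of the modified `1`-deck operator with no identity term. -/
theorem modified_in_terms_of_modified_one (N m : ℕ) (hm : m ≤ N) (i : ℕ) (hi : 1 ≤ i) :
    ∃ q : Polynomial ℚ, q.coeff 0 = 0 ∧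
      (B N m i).map (Int.cast : ℤ → ℚ)
        = Polynomial.aeval ((B N m 1).map (Int.cast : ℤ → ℚ)) q := by
  induction i, hi using Nat.le_induction with
  | base => exact ⟨Polynomial.X, by simp, by simp⟩
  | succ k hk1 ih =>
    rcases Nat.lt_or_ge k m with hk | hk
    · obtain ⟨q, hq0, hq⟩ := ih
      set c : ℚ := (k : ℚ) * (N - 2 * m + k + 1) with hc
      have hne : ((k : ℚ) + 1) ^ 2 ≠ 0 := by positivity
      refine ⟨Polynomial.C ((((k : ℚ) + 1) ^ 2)⁻¹) * (q * Polynomial.X - Polynomial.C c * q),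
        by simp [hq0], ?_⟩
      have hrec : (B N m k).map (Int.cast : ℤ → ℚ) * (B N m 1).map (Int.cast : ℤ → ℚ)
          = ((k : ℚ) + 1) ^ 2 • (B N m (k + 1)).map (Int.cast : ℤ → ℚ)
            + c • (B N m k).map (Int.cast : ℤ → ℚ) := by
        ext T S
        have h := congrArg (Int.cast : ℤ → ℚ) (congrFun (congrFun (B_mul_B_one (N := N) hk) T) S)
        simp only [Matrix.mul_apply, Matrix.add_apply, Matrix.smul_apply, smul_eq_mul,
          Matrix.map_apply] at h ⊢
        push_cast at h
        rw [h]
      simp only [map_mul, map_sub, Polynomial.aeval_C, Polynomial.aeval_X, ← hq]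
      rw [hrec, ← Algebra.smul_def, ← Algebra.smul_def, add_sub_cancel_right, smul_smul,
        inv_mul_cancel₀ hne, one_smul]
    · exact ⟨0, by simp, by rw [B_eq_zero (Nat.lt_succ_of_le hk)]; ext; simp⟩
end

section
/- Let P and Q be multisets of simple graphs on Fin n in which every member has exactly m edges. If the modified 1-decks of P and Q agree up to isomorphism, then the 1-edge decks of P and Q agree up to isomorphism (i.e. the multiset unions of ED_1 over the members of P and of Q have equal images under the quotient map to isomorphism classes). No restriction on m beyond 0 ≤ m ≤ C(n,2) is needed. -/
/-!
Work with integer-valued functions on the finite set of graphs on `Fin n`, with the standard inner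
product. Let `delSum φ` send `G` to the sum of `φ (G - e)` over the edges `e` of `G`, and let
`addSum ψ` send `H` to the sum of `ψ (H + e)` over the non-edges `e` of `H`. These two operators are
adjoint (`sum_delSum_mul`), and they compute sums of test functions over decks: the sum of `φ` over
`ED 1 G` is `delSum φ G`, and the sum of `ψ` over `MD 1 G` is `delSum (addSum ψ) G`.

Let `p` be the difference of the multiplicity functions of `P` and `Q`, and let `x` be the sum of
the translates of `p` under the symmetric group. For an isomorphism-invariant `f`, the inner
product `⟨x, f⟩` is `n!` times `⟨p, f⟩`, the difference of the sums of `f` over `P` and over `Q`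
(`sum_symmetrize_mul`). Testing the hypothesis against `x` itself, which is invariant, gives
`0 = ⟨x, delSum (addSum x)⟩ = ⟨addSum x, addSum x⟩`, so `addSum x = 0`. Hence for every invariant
`φ`, `n! ⟨p, delSum φ⟩ = ⟨x, delSum φ⟩ = ⟨addSum x, φ⟩ = 0`, so `P` and `Q` have the same sum of
`φ` over their edge decks. Taking for `φ` the indicators of isomorphism classes finishes the proof.
-/

open Finset

noncomputable section
open scoped Classical

/-- Two simple graphs on `Fin n` are related iff they are isomorphic. -/
def isoSetoid (n : ℕ) : Setoid (SimpleGraph (Fin n)) where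
  r G H := Nonempty (G ≃g H)
  iseqv := ⟨fun _ => ⟨SimpleGraph.Iso.refl⟩, fun h => ⟨h.some.symm⟩,
    fun h h' => ⟨h.some.trans h'.some⟩⟩

/-- The isomorphism class of a simple graph on `Fin n`. -/
def isoClass {n : ℕ} (G : SimpleGraph (Fin n)) : Quotient (isoSetoid n) :=
  Quotient.mk (isoSetoid n) G

/-- The `i`-edge deck `ED_i(G)`: the multiset of graphs `G − X` over all
`i`-element subsets `X` of the edge set of `G`. -/
def ED {n : ℕ} (i : ℕ) (G : SimpleGraph (Fin n)) : Multiset (SimpleGraph (Fin n)) :=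
  (G.edgeFinset.powersetCard i).val.map fun X =>
    G.deleteEdges (X : Set (Sym2 (Fin n)))

/-- The perturbed `i`-deck `PD_i(G)`: the multiset of graphs `(G − X) + Y` over all
pairs of an `i`-element subset `X` of the edges of `G` and an `i`-element set `Y`
of non-edges of `G`. -/
def PD {n : ℕ} (i : ℕ) (G : SimpleGraph (Fin n)) : Multiset (SimpleGraph (Fin n)) :=
  ((G.edgeFinset.powersetCard i) ×ˢ (Gᶜ.edgeFinset.powersetCard i)).val.map fun p =>
    SimpleGraph.fromEdgeSet
      (((G.edgeFinset \ p.1) ∪ p.2 : Finset (Sym2 (Fin n))) : Set (Sym2 (Fin n)))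

/-- The modified `i`-deck `MD_i(G)`: the multiset of graphs `(G − X) + Y` over all
pairs of an `i`-element subset `X` of the edges of `G` and an `i`-element set `Y`
of non-edges of `G − X` (so `Y` may reuse edges of `X`). -/
def MD {n : ℕ} (i : ℕ) (G : SimpleGraph (Fin n)) : Multiset (SimpleGraph (Fin n)) :=
  (G.edgeFinset.powersetCard i).val.bind fun X =>
    ((G.deleteEdges (X : Set (Sym2 (Fin n))))ᶜ.edgeFinset.powersetCard i).val.map fun Y =>
      SimpleGraph.fromEdgeSet
        (((G.edgeFinset \ X) ∪ Y : Finset (Sym2 (Fin n))) : Set (Sym2 (Fin n)))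

/-- `H` arises from `G` by deleting exactly one edge. -/
def DelRel {n : ℕ} (H G : SimpleGraph (Fin n)) : Prop :=
  ∃ e ∈ G.edgeSet, H.edgeSet = G.edgeSet \ {e}

/-- The sum of `φ` over the graphs obtained from `G` by deleting one edge. -/
def delSum {n : ℕ} (φ : SimpleGraph (Fin n) → ℤ) (G : SimpleGraph (Fin n)) : ℤ :=
  ∑ H, if DelRel H G then φ H else 0

/-- The sum of `ψ` over the graphs obtained from `H` by adding one non-edge. -/
def addSum {n : ℕ} (ψ : SimpleGraph (Fin n) → ℤ) (H : SimpleGraph (Fin n)) : ℤ :=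
  ∑ G, if DelRel H G then ψ G else 0

/-- Invariance under relabelling of the vertices, i.e. under isomorphism. -/
def RelabelInvariant {n : ℕ} (f : SimpleGraph (Fin n) → ℤ) : Prop :=
  ∀ (σ : Equiv.Perm (Fin n)) (G : SimpleGraph (Fin n)), f (σ.simpleGraph G) = f G

/-- The sum of all translates of `p` under the symmetric group. -/
def symmetrize {n : ℕ} (p : SimpleGraph (Fin n) → ℤ) (G : SimpleGraph (Fin n)) : ℤ :=
  ∑ σ : Equiv.Perm (Fin n), p (σ.simpleGraph G)

lemma sum_delSum_mul {n : ℕ} (x φ : SimpleGraph (Fin n) → ℤ) :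
    ∑ G, x G * delSum φ G = ∑ H, addSum x H * φ H := by
  simp only [delSum, addSum, Finset.mul_sum, Finset.sum_mul]
  rw [Finset.sum_comm]
  refine Finset.sum_congr rfl fun H _ => Finset.sum_congr rfl fun G _ => ?_
  split_ifs <;> simp

lemma edgeSet_simpleGraph {n : ℕ} (σ : Equiv.Perm (Fin n)) (G : SimpleGraph (Fin n)) :
    (σ.simpleGraph G).edgeSet = Sym2.map σ '' G.edgeSet := by
  ext e
  induction e with
  | _ a b =>
    constructor
    · intro h
      exact ⟨s(σ.symm a, σ.symm b), h, by simp⟩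
    · rintro ⟨f, hf, hfe⟩
      induction f with
      | _ c d =>
        rw [← hfe]
        change G.Adj (σ.symm (σ c)) (σ.symm (σ d))
        simpa using hf

lemma DelRel.relabel {n : ℕ} {H G : SimpleGraph (Fin n)} (h : DelRel H G)
    (σ : Equiv.Perm (Fin n)) : DelRel (σ.simpleGraph H) (σ.simpleGraph G) := by
  obtain ⟨e, he, hH⟩ := h
  refine ⟨Sym2.map σ e, ?_, ?_⟩
  · rw [edgeSet_simpleGraph]
    exact ⟨e, he, rfl⟩
  · rw [edgeSet_simpleGraph, edgeSet_simpleGraph, hH,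
      Set.image_sdiff (Sym2.map.injective σ.injective), Set.image_singleton]

lemma delRel_relabel_iff {n : ℕ} {H G : SimpleGraph (Fin n)} (σ : Equiv.Perm (Fin n)) :
    DelRel (σ.simpleGraph H) (σ.simpleGraph G) ↔ DelRel H G := by
  refine ⟨fun h => ?_, fun h => h.relabel σ⟩
  have h' := h.relabel σ.symm
  rw [← Equiv.symm_simpleGraph] at h'
  simpa only [Equiv.symm_apply_apply] using h'

lemma RelabelInvariant.delSum {n : ℕ} {φ : SimpleGraph (Fin n) → ℤ} (hφ : RelabelInvariant φ) :
    RelabelInvariant (delSum φ) := by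
  intro σ G
  refine (Fintype.sum_equiv σ.simpleGraph _ _ fun H => ?_).symm
  simp only [delRel_relabel_iff, hφ σ H]

lemma RelabelInvariant.addSum {n : ℕ} {ψ : SimpleGraph (Fin n) → ℤ} (hψ : RelabelInvariant ψ) :
    RelabelInvariant (addSum ψ) := by
  intro σ H
  refine (Fintype.sum_equiv σ.simpleGraph _ _ fun G => ?_).symm
  simp only [delRel_relabel_iff, hψ σ G]

lemma relabelInvariant_symmetrize {n : ℕ} (p : SimpleGraph (Fin n) → ℤ) :
    RelabelInvariant (symmetrize p) := by
  intro τ G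
  exact Fintype.sum_equiv (Equiv.mulRight τ) _ _ fun σ => rfl

lemma sum_symmetrize_mul {n : ℕ} (p : SimpleGraph (Fin n) → ℤ) {f : SimpleGraph (Fin n) → ℤ}
    (hf : RelabelInvariant f) :
    ∑ G, symmetrize p G * f G = (n.factorial : ℤ) * ∑ G, p G * f G := by
  simp only [symmetrize, Finset.sum_mul]
  rw [Finset.sum_comm]
  have key (σ : Equiv.Perm (Fin n)) :
      ∑ G, p (σ.simpleGraph G) * f G = ∑ G, p G * f G :=
    Fintype.sum_equiv σ.simpleGraph _ _ fun G => by rw [hf σ G]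
  rw [Finset.sum_congr rfl fun σ _ => key σ]
  simp [Fintype.card_perm]

lemma sum_edges_eq_delSum {n : ℕ} (φ : SimpleGraph (Fin n) → ℤ) (G : SimpleGraph (Fin n)) :
    ∑ e ∈ G.edgeFinset, φ (G.deleteEdges {e}) = delSum φ G := by
  rw [delSum, ← Finset.sum_filter]
  refine Finset.sum_bij (fun e _ => G.deleteEdges {e}) ?_ ?_ ?_ fun _ _ => rfl
  · intro e he
    simp only [Finset.mem_filter, Finset.mem_univ, true_and]
    exact ⟨e, by simpa using he, by simp⟩
  · intro e he f hf h
    have h' := congrArg SimpleGraph.edgeSet h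
    simp only [SimpleGraph.edgeSet_deleteEdges] at h'
    rw [SimpleGraph.mem_edgeFinset] at he
    by_contra hne
    have : e ∈ G.edgeSet \ {e} := by rw [h']; exact ⟨he, hne⟩
    exact this.2 rfl
  · intro H hH
    obtain ⟨e, he, h⟩ := (Finset.mem_filter.1 hH).2
    refine ⟨e, by simpa using he, ?_⟩
    rw [← SimpleGraph.edgeSet_inj, h, SimpleGraph.edgeSet_deleteEdges]

lemma mem_edgeSet_compl_iff {n : ℕ} (H : SimpleGraph (Fin n)) (e : Sym2 (Fin n)) :
    e ∈ Hᶜ.edgeSet ↔ ¬ e.IsDiag ∧ e ∉ H.edgeSet := by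
  induction e with
  | _ a b => simp [SimpleGraph.compl_adj]

lemma edgeSet_fromEdgeSet_insert {n : ℕ} (H : SimpleGraph (Fin n)) {e : Sym2 (Fin n)}
    (he : ¬ e.IsDiag) :
    (SimpleGraph.fromEdgeSet (H.edgeSet ∪ {e})).edgeSet = H.edgeSet ∪ {e} := by
  rw [SimpleGraph.edgeSet_fromEdgeSet]
  ext f
  simp only [Set.mem_sdiff, Set.mem_union, Set.mem_singleton_iff]
  refine ⟨fun h => h.1, fun h => ⟨h, ?_⟩⟩
  rcases h with h | rfl
  · exact H.not_isDiag_of_mem_edgeSet h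
  · exact he

lemma sum_nonedges_eq_addSum {n : ℕ} (ψ : SimpleGraph (Fin n) → ℤ) (H : SimpleGraph (Fin n)) :
    ∑ e ∈ Hᶜ.edgeFinset, ψ (SimpleGraph.fromEdgeSet (H.edgeSet ∪ {e})) = addSum ψ H := by
  rw [addSum, ← Finset.sum_filter]
  refine Finset.sum_bij (fun e _ => SimpleGraph.fromEdgeSet (H.edgeSet ∪ {e})) ?_ ?_ ?_
    fun _ _ => rfl
  · intro e he
    rw [SimpleGraph.mem_edgeFinset, mem_edgeSet_compl_iff] at he
    simp only [Finset.mem_filter, Finset.mem_univ, true_and]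
    refine ⟨e, ?_, ?_⟩
    · rw [edgeSet_fromEdgeSet_insert H he.1]
      simp
    · rw [edgeSet_fromEdgeSet_insert H he.1]
      ext f
      simp only [Set.mem_sdiff, Set.mem_union, Set.mem_singleton_iff]
      refine ⟨fun h => ⟨Or.inl h, ?_⟩, fun h => h.1.resolve_right h.2⟩
      rintro rfl
      exact he.2 h
  · intro e he f hf h
    rw [SimpleGraph.mem_edgeFinset, mem_edgeSet_compl_iff] at he hf
    have h' := congrArg SimpleGraph.edgeSet h
    simp only [edgeSet_fromEdgeSet_insert H he.1, edgeSet_fromEdgeSet_insert H hf.1] at h'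
    have : e ∈ H.edgeSet ∪ {f} := by rw [← h']; simp
    exact this.resolve_left he.2
  · intro G hG
    obtain ⟨e, he, h⟩ := (Finset.mem_filter.1 hG).2
    have hd := G.not_isDiag_of_mem_edgeSet he
    refine ⟨e, ?_, ?_⟩
    · rw [SimpleGraph.mem_edgeFinset, mem_edgeSet_compl_iff, h]
      exact ⟨hd, fun h' => h'.2 rfl⟩
    · rw [← SimpleGraph.edgeSet_inj, edgeSet_fromEdgeSet_insert H hd, h]
      exact Set.sdiff_union_of_subset (by simpa using he)

lemma sum_ED_one {n : ℕ} (φ : SimpleGraph (Fin n) → ℤ) (G : SimpleGraph (Fin n)) :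
    ((ED 1 G).map φ).sum = delSum φ G := by
  rw [← sum_edges_eq_delSum, ED, Finset.powersetCard_one, Multiset.map_map]
  -- In `ED` the coercion of `X` to a set is a monadic lift over the multiset of all `X`.
  simp only [Finset.map_val, Multiset.bind_def, Multiset.pure_def, Multiset.bind_singleton,
    Multiset.map_map]
  refine congrArg Multiset.sum (Multiset.map_congr rfl fun e _ => ?_)
  simp

lemma sum_MD_one {n : ℕ} (ψ : SimpleGraph (Fin n) → ℤ) (G : SimpleGraph (Fin n)) :
    ((MD 1 G).map ψ).sum = delSum (addSum ψ) G := by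
  rw [← sum_edges_eq_delSum, MD, Multiset.map_bind, Multiset.sum_bind, Finset.powersetCard_one,
    Finset.map_val, Multiset.map_map]
  refine congrArg Multiset.sum (Multiset.map_congr rfl fun e _ => ?_)
  rw [← sum_nonedges_eq_addSum]
  simp only [Function.comp_apply, Function.Embedding.coeFn_mk, Finset.powersetCard_one,
    Finset.map_val, Multiset.map_map]
  refine congrArg Multiset.sum (Multiset.map_congr ?_ fun f _ => ?_)
  · congr 1
    ext f
    simp only [SimpleGraph.mem_edgeFinset, Finset.coe_singleton]
  · simp

lemma sum_map_eq_sum_count {n : ℕ} (P : Multiset (SimpleGraph (Fin n)))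
    (f : SimpleGraph (Fin n) → ℤ) :
    (P.map f).sum = ∑ G, (P.count G : ℤ) * f G := by
  rw [Finset.sum_multiset_map_count]
  simp only [nsmul_eq_mul]
  refine Finset.sum_subset (Finset.subset_univ _) fun G _ hG => ?_
  rw [Multiset.count_eq_zero_of_notMem (by simpa using hG)]
  simp

/-- The sum of an invariant function over a multiset of graphs depends only on the isomorphism
classes, because the function factors through the quotient. -/
lemma RelabelInvariant.sum_eq {n : ℕ} {f : SimpleGraph (Fin n) → ℤ} (hf : RelabelInvariant f)
    {R S : Multiset (SimpleGraph (Fin n))} (h : R.map isoClass = S.map isoClass) :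
    (R.map f).sum = (S.map f).sum := by
  have hlift : ∀ G H : SimpleGraph (Fin n), (isoSetoid n).r G H → f G = f H := by
    rintro G H ⟨e⟩
    rw [← hf e.toEquiv G]
    congr 1
    ext a b
    change G.Adj (e.symm a) (e.symm b) ↔ H.Adj a b
    exact e.symm.map_adj_iff
  have hcomp : f = (Quotient.lift f hlift) ∘ isoClass := rfl
  rw [hcomp, ← Multiset.map_map, ← Multiset.map_map, h]

lemma isoClass_relabel {n : ℕ} (σ : Equiv.Perm (Fin n)) (G : SimpleGraph (Fin n)) :
    isoClass (σ.simpleGraph G) = isoClass G :=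
  Quotient.sound ⟨SimpleGraph.Iso.comap σ.symm G⟩

lemma count_map_isoClass {n : ℕ} (R : Multiset (SimpleGraph (Fin n)))
    (c : Quotient (isoSetoid n)) :
    ((R.map isoClass).count c : ℤ) = (R.map fun G => if c = isoClass G then (1 : ℤ) else 0).sum := by
  induction R using Multiset.induction_on with
  | empty => simp
  | cons G R ih =>
    rw [Multiset.map_cons, Multiset.count_cons, Multiset.map_cons, Multiset.sum_cons, ← ih]
    push_cast
    ring

/-- If the modified `1`-decks of two collections of `m`-edge graphs agree up to
isomorphism, then their `1`-edge decks also agree up to isomorphism; no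
restriction on `m` is needed. -/
theorem edge_decks_determined_by_modified_decks (n m : ℕ)
    (P Q : Multiset (SimpleGraph (Fin n)))
    (hP : ∀ G ∈ P, G.edgeFinset.card = m) (hQ : ∀ G ∈ Q, G.edgeFinset.card = m)
    (h : (P.bind (MD 1)).map isoClass = (Q.bind (MD 1)).map isoClass) :
    (P.bind (ED 1)).map isoClass = (Q.bind (ED 1)).map isoClass := by
  set p : SimpleGraph (Fin n) → ℤ := fun G => (P.count G : ℤ) - Q.count G with hp
  have hdiff (f : SimpleGraph (Fin n) → ℤ) :
      ∑ G, p G * f G = (P.map f).sum - (Q.map f).sum := by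
    simp only [hp, sum_map_eq_sum_count, sub_mul, Finset.sum_sub_distrib]
  set x := symmetrize p with hx
  have hxinv : RelabelInvariant x := relabelInvariant_symmetrize p
  have hMD (f : SimpleGraph (Fin n) → ℤ) (hf : RelabelInvariant f) :
      ∑ G, p G * delSum (addSum f) G = 0 := by
    have := hf.sum_eq h
    simp only [Multiset.map_bind, Multiset.sum_bind, sum_MD_one] at this
    rw [hdiff, sub_eq_zero]
    exact this
  have horth : ∑ H, addSum x H * addSum x H = 0 := by
    rw [← sum_delSum_mul, hx, sum_symmetrize_mul p hxinv.addSum.delSum, hMD x hxinv, mul_zero]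
  have hzero (H : SimpleGraph (Fin n)) : addSum x H = 0 := by
    have := (Finset.sum_eq_zero_iff_of_nonneg fun H _ => mul_self_nonneg (addSum x H)).1 horth H
      (Finset.mem_univ H)
    exact mul_self_eq_zero.1 this
  ext c
  have hφ : RelabelInvariant fun G : SimpleGraph (Fin n) => if c = isoClass G then (1 : ℤ) else 0 :=
    fun σ G => by simp only [isoClass_relabel]
  have hfac : (n.factorial : ℤ) *
      ∑ G, p G * delSum (fun G => if c = isoClass G then (1 : ℤ) else 0) G = 0 := by
    rw [← sum_symmetrize_mul p hφ.delSum, ← hx, sum_delSum_mul]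
    simp [hzero]
  have hpair := (mul_eq_zero.1 hfac).resolve_left (by exact_mod_cast n.factorial_ne_zero)
  rw [hdiff, sub_eq_zero] at hpair
  have hcount : (((P.bind (ED 1)).map isoClass).count c : ℤ) =
      ((Q.bind (ED 1)).map isoClass).count c := by
    rw [count_map_isoClass, count_map_isoClass]
    simp only [Multiset.map_bind, Multiset.sum_bind, sum_ED_one]
    exact hpair
  exact_mod_cast hcount

end
end
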